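/- arXiv:2605.24052 — 3 statements merged into one kernel-verified Lean document; each statement's English description precedes it below -/
import Mathlib

section
/- Let η > 0 and q ∈ (0,1). Define F : ℝ → ℝ by F(r) = q·exp(−η(r−1)²) + (1−q)·exp(−ηr²). Then F is differentiable with F'(q) = −2η·q(1−q)·( exp(−ηq²) − exp(−η(1−q)²) ). In particular, if q > 1/2 then F'(q) > 0 and if q < 1/2 then F'(q) < 0; hence for every q ∈ (0,1) with q ≠ 1/2, the truthful report r = q is not a maximizer of F: there exists r* ≠ q with F(r*) > F(q). -/
/-!
Let a report with squared loss `x` multiply the weight by `ψ x`. The expected multiplier of a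
worker with belief `q` has derivative `2 q (1 - q) (ψ' (q²) - ψ' ((1 - q)²))` at the truthful
report. It vanishes for every `q` when `ψ` is affine, which is the truthful quadratic scoring rule;
when `ψ` is strictly convex it has the sign of `q² - (1 - q)² = 2 q - 1`, so that shading the report
away from `1 / 2` pays. The Hedge multiplier `ψ x = exp (-η x)` is strictly convex.
-/

open Set

/-- The expected weight multiplier of a worker who believes that the outcome is `1` with probability
`q` and reports `r`, under a scheme that multiplies the weight by `ψ x` when the squared loss
is `x`. The Hedge scheme is `ψ x = exp (-η x)`. -/
def expectedMultiplier (ψ : ℝ → ℝ) (q r : ℝ) : ℝ :=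
  q * ψ ((r - 1) ^ 2) + (1 - q) * ψ (r ^ 2)

theorem hasDerivAt_expectedMultiplier {ψ : ℝ → ℝ} {d₀ d₁ r : ℝ} (q : ℝ)
    (h₁ : HasDerivAt ψ d₁ ((r - 1) ^ 2)) (h₀ : HasDerivAt ψ d₀ (r ^ 2)) :
    HasDerivAt (expectedMultiplier ψ q)
      (q * (d₁ * (2 * (r - 1))) + (1 - q) * (d₀ * (2 * r))) r := by
  have hsq₁ : HasDerivAt (fun s : ℝ => (s - 1) ^ 2) (2 * (r - 1)) r := by
    simpa using ((hasDerivAt_id r).sub_const 1).fun_pow 2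
  have hsq₀ : HasDerivAt (fun s : ℝ => s ^ 2) (2 * r) r := by
    simpa using hasDerivAt_pow 2 r
  have hψ₁ : HasDerivAt (fun s => ψ ((s - 1) ^ 2)) (d₁ * (2 * (r - 1))) r :=
    h₁.comp_of_eq r hsq₁ rfl
  have hψ₀ : HasDerivAt (fun s => ψ (s ^ 2)) (d₀ * (2 * r)) r := h₀.comp_of_eq r hsq₀ rfl
  exact (hψ₁.const_mul q).add (hψ₀.const_mul (1 - q))

/-- The derivative of `expectedMultiplier ψ q` at the truthful report `q`, as a function of the
derivative `ψ'` of `ψ`: the marginal gain from raising the report above the belief. -/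
def marginalGain (ψ' : ℝ → ℝ) (q : ℝ) : ℝ :=
  2 * q * (1 - q) * (ψ' (q ^ 2) - ψ' ((1 - q) ^ 2))

theorem hasDerivAt_expectedMultiplier_self {ψ ψ' : ℝ → ℝ} {q : ℝ}
    (h₁ : HasDerivAt ψ (ψ' ((1 - q) ^ 2)) ((1 - q) ^ 2))
    (h₀ : HasDerivAt ψ (ψ' (q ^ 2)) (q ^ 2)) :
    HasDerivAt (expectedMultiplier ψ q) (marginalGain ψ' q) q := by
  rw [sub_sq_comm] at h₁
  refine (hasDerivAt_expectedMultiplier q h₁ h₀).congr_deriv ?_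
  rw [marginalGain, sub_sq_comm 1 q]
  ring

theorem marginalGain_one_sub (ψ' : ℝ → ℝ) (q : ℝ) :
    marginalGain ψ' (1 - q) = -marginalGain ψ' q := by
  simp only [marginalGain, sub_sub_cancel]
  ring

theorem sq_mem_Ioo_zero_one {R : Type*} [Semiring R] [PartialOrder R] [IsStrictOrderedRing R]
    {x : R} (hx : x ∈ Ioo (0 : R) 1) : x ^ 2 ∈ Ioo (0 : R) 1 :=
  ⟨pow_pos hx.1 2, pow_lt_one₀ hx.1.le hx.2 two_ne_zero⟩

theorem one_sub_sq_lt_sq_iff {K : Type*} [Field K] [LinearOrder K] [IsStrictOrderedRing K] {x : K} :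
    (1 - x) ^ 2 < x ^ 2 ↔ 1 / 2 < x := by
  constructor <;> intro h <;> linarith

section StrictMonoOn

variable {ψ' : ℝ → ℝ} {q : ℝ}

theorem marginalGain_pos_iff (hmono : StrictMonoOn ψ' (Ioo 0 1)) (hq : q ∈ Ioo (0 : ℝ) 1) :
    0 < marginalGain ψ' q ↔ 1 / 2 < q := by
  have hq' : 1 - q ∈ Ioo (0 : ℝ) 1 := Ioo.one_sub_mem hq
  have hcoeff : 0 < 2 * q * (1 - q) := mul_pos (mul_pos two_pos hq.1) hq'.1
  rw [marginalGain, mul_pos_iff_of_pos_left hcoeff, sub_pos,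
    hmono.lt_iff_lt (sq_mem_Ioo_zero_one hq') (sq_mem_Ioo_zero_one hq), one_sub_sq_lt_sq_iff]

theorem marginalGain_neg_iff (hmono : StrictMonoOn ψ' (Ioo 0 1)) (hq : q ∈ Ioo (0 : ℝ) 1) :
    marginalGain ψ' q < 0 ↔ q < 1 / 2 := by
  rw [← neg_pos, ← marginalGain_one_sub, marginalGain_pos_iff hmono (Ioo.one_sub_mem hq)]
  constructor <;> intro h <;> linarith

end StrictMonoOn

theorem exists_lt_of_hasDerivAt_ne_zero {f : ℝ → ℝ} {f' a : ℝ} (hf : HasDerivAt f f' a)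
    (hf' : f' ≠ 0) : ∃ b, f a < f b := by
  by_contra! hmax
  have hlocal : IsLocalMax f a := Filter.Eventually.of_forall hmax
  exact hf' (hlocal.hasDerivAt_eq_zero hf)

theorem hasDerivAt_exp_const_mul (c x : ℝ) :
    HasDerivAt (fun x => Real.exp (c * x)) (c * Real.exp (c * x)) x := by
  simpa [mul_comm] using ((hasDerivAt_id x).const_mul c).exp

theorem strictMono_const_mul_exp_const_mul {c : ℝ} (hc : c ≠ 0) :
    StrictMono fun x => c * Real.exp (c * x) := by
  refine strictMono_of_hasDerivAt_pos (fun x => (hasDerivAt_exp_const_mul c x).const_mul c) ?_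
  intro x
  rw [← mul_assoc]
  exact mul_pos (mul_self_pos.mpr hc) (Real.exp_pos _)

theorem marginalGain_const_mul_exp_const_mul (c q : ℝ) :
    marginalGain (fun x => c * Real.exp (c * x)) q =
      2 * c * q * (1 - q) * (Real.exp (c * q ^ 2) - Real.exp (c * (1 - q) ^ 2)) := by
  rw [marginalGain]
  ring

theorem stmt6_general {ψ ψ' : ℝ → ℝ} {q : ℝ} (hψ : ∀ x ∈ Ioo (0 : ℝ) 1, HasDerivAt ψ (ψ' x) x)
    (hmono : StrictMonoOn ψ' (Ioo 0 1)) (hq : q ∈ Ioo (0 : ℝ) 1) :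
    HasDerivAt (expectedMultiplier ψ q) (marginalGain ψ' q) q ∧
    (q > 1 / 2 → 0 < marginalGain ψ' q) ∧
    (q < 1 / 2 → marginalGain ψ' q < 0) ∧
    (q ≠ 1 / 2 → ∃ r, r ≠ q ∧ expectedMultiplier ψ q r > expectedMultiplier ψ q q) := by
  have hderiv : HasDerivAt (expectedMultiplier ψ q) (marginalGain ψ' q) q :=
    hasDerivAt_expectedMultiplier_self
      (hψ _ (sq_mem_Ioo_zero_one (Ioo.one_sub_mem hq))) (hψ _ (sq_mem_Ioo_zero_one hq))
  have hpos : 1 / 2 < q → 0 < marginalGain ψ' q := (marginalGain_pos_iff hmono hq).mpr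
  have hneg : q < 1 / 2 → marginalGain ψ' q < 0 := (marginalGain_neg_iff hmono hq).mpr
  refine ⟨hderiv, hpos, hneg, fun hne => ?_⟩
  have hne_zero : marginalGain ψ' q ≠ 0 :=
    hne.lt_or_gt.elim (fun h => (hneg h).ne) (fun h => (hpos h).ne')
  obtain ⟨r, hr⟩ := exists_lt_of_hasDerivAt_ne_zero hderiv hne_zero
  exact ⟨r, ne_of_apply_ne _ hr.ne', hr⟩

/-- Untruthfulness of the Hedge scheme: the expected weight multiplier
`F(r) = q e^{−η(r−1)²} + (1−q) e^{−ηr²}` has nonzero derivative at the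
truthful report `r = q` whenever `q ≠ 1/2`, so `r = q` is not a maximizer. -/
theorem stmt6 (η q : ℝ) (hη : 0 < η) (hq : q ∈ Set.Ioo (0:ℝ) 1) :
    let F : ℝ → ℝ := fun r =>
      q * Real.exp (-η * (r - 1) ^ 2) + (1 - q) * Real.exp (-η * r ^ 2)
    HasDerivAt F
      (-2 * η * q * (1 - q) *
        (Real.exp (-η * q ^ 2) - Real.exp (-η * (1 - q) ^ 2))) q ∧
    (q > 1/2 → 0 < -2 * η * q * (1 - q) *
        (Real.exp (-η * q ^ 2) - Real.exp (-η * (1 - q) ^ 2))) ∧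
    (q < 1/2 → -2 * η * q * (1 - q) *
        (Real.exp (-η * q ^ 2) - Real.exp (-η * (1 - q) ^ 2)) < 0) ∧
    (q ≠ 1/2 → ∃ r : ℝ, r ≠ q ∧ F r > F q) := by
  rw [neg_mul_comm 2 η, ← marginalGain_const_mul_exp_const_mul]
  exact stmt6_general (fun x _ => hasDerivAt_exp_const_mul (-η) x)
    ((strictMono_const_mul_exp_const_mul (neg_ne_zero.mpr hη.ne')).strictMonoOn _) hq
end

section
/- Let 0 < α < 1/2, let w_i⁰, w_k⁰ > 0 with w_i⁰ < w_k⁰, and let (ℓ_i^s)_{s≥1}, (ℓ_k^s)_{s≥1} be sequences in [0,1] satisfying ℓ_k^s − ℓ_i^s ≥ Δ for all s, for some Δ > 0. Then for every integer τ with τ ≥ ln(w_k⁰ / w_i⁰)/(αΔ), the multiplicatively updated weights satisfy w_i⁰ · Π_{s=1}^{τ} (1 − α ℓ_i^s) ≥ w_k⁰ · Π_{s=1}^{τ} (1 − α ℓ_k^s). In particular, a newly-arriving worker whose per-slot loss is uniformly smaller by Δ overtakes an incumbent worker in weight within ⌈ln(w_k⁰/w_i⁰)/(αΔ)⌉ slots.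 -/
open Finset

/-!
Since `x ↦ (1 - x) * exp x` is decreasing on `[0, ∞)`, raising a scaled loss from `x` to `y`
divides the update factor `1 - x` by at least `exp (y - x)`. Over `τ` slots with gap at least `Δ`
the newcomer therefore gains a relative factor of at least `exp (τ * (α * Δ))`, which makes up for
the initial ratio `wk / wi` as soon as `log (wk / wi) ≤ τ * (α * Δ)`.
-/

lemma antitoneOn_one_sub_mul_exp :
    AntitoneOn (fun x : ℝ ↦ (1 - x) * Real.exp x) (Set.Ici 0) := by
  have hderiv (x : ℝ) : HasDerivAt (fun x : ℝ ↦ (1 - x) * Real.exp x) (-(x * Real.exp x)) x :=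
    (((hasDerivAt_id' x).const_sub 1).mul (Real.hasDerivAt_exp x)).congr_deriv (by ring)
  refine antitoneOn_of_hasDerivWithinAt_nonpos (convex_Ici 0)
    (fun x _ ↦ (hderiv x).continuousAt.continuousWithinAt)
    (fun x _ ↦ (hderiv x).hasDerivWithinAt) fun x hx ↦ ?_
  have hx0 : 0 ≤ x := interior_subset hx
  exact neg_nonpos.2 (mul_nonneg hx0 (Real.exp_pos x).le)

lemma one_sub_mul_exp_sub_le {x y : ℝ} (hx : 0 ≤ x) (hxy : x ≤ y) :
    (1 - y) * Real.exp (y - x) ≤ 1 - x := by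
  rw [Real.exp_sub, ← mul_div_assoc, div_le_iff₀ (Real.exp_pos x)]
  exact antitoneOn_one_sub_mul_exp hx (hx.trans hxy) hxy

section Prod

variable {ι : Type*} {s : Finset ι} {x y : ι → ℝ}

lemma prod_one_sub_mul_exp_sum_sub_le (hx : ∀ i ∈ s, 0 ≤ x i) (hxy : ∀ i ∈ s, x i ≤ y i)
    (hy : ∀ i ∈ s, y i ≤ 1) :
    (∏ i ∈ s, (1 - y i)) * Real.exp (∑ i ∈ s, (y i - x i)) ≤ ∏ i ∈ s, (1 - x i) := by
  rw [Real.exp_sum, ← prod_mul_distrib]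
  exact prod_le_prod (fun i hi ↦ mul_nonneg (sub_nonneg.2 (hy i hi)) (Real.exp_pos _).le)
    fun i hi ↦ one_sub_mul_exp_sub_le (hx i hi) (hxy i hi)

lemma mul_prod_one_sub_le_mul_prod_one_sub {v w : ℝ} (hw : 0 ≤ w) (hx : ∀ i ∈ s, 0 ≤ x i)
    (hxy : ∀ i ∈ s, x i ≤ y i) (hy : ∀ i ∈ s, y i ≤ 1)
    (hvw : v ≤ w * Real.exp (∑ i ∈ s, (y i - x i))) :
    v * ∏ i ∈ s, (1 - y i) ≤ w * ∏ i ∈ s, (1 - x i) :=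
  calc v * ∏ i ∈ s, (1 - y i)
    _ ≤ w * Real.exp (∑ i ∈ s, (y i - x i)) * ∏ i ∈ s, (1 - y i) :=
      mul_le_mul_of_nonneg_right hvw (prod_nonneg fun i hi ↦ sub_nonneg.2 (hy i hi))
    _ = w * ((∏ i ∈ s, (1 - y i)) * Real.exp (∑ i ∈ s, (y i - x i))) := by ring
    _ ≤ w * ∏ i ∈ s, (1 - x i) :=
      mul_le_mul_of_nonneg_left (prod_one_sub_mul_exp_sum_sub_le hx hxy hy) hw

end Prod

theorem stmt12_general {α wi wk Δ : ℝ} {ℓi ℓk : ℕ → ℝ} {τ : ℕ} (hα : 0 < α) (hwi : 0 < wi)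
    (hℓi : ∀ s ∈ Icc 1 τ, 0 ≤ ℓi s) (hℓk : ∀ s ∈ Icc 1 τ, α * ℓk s ≤ 1)
    (hΔ : 0 < Δ) (hgap : ∀ s ∈ Icc 1 τ, Δ ≤ ℓk s - ℓi s)
    (hτ : Real.log (wk / wi) / (α * Δ) ≤ τ) :
    wk * ∏ s ∈ Icc 1 τ, (1 - α * ℓk s) ≤ wi * ∏ s ∈ Icc 1 τ, (1 - α * ℓi s) := by
  have hscaled_gap : ∀ s ∈ Icc 1 τ, α * Δ ≤ α * ℓk s - α * ℓi s := fun s hs ↦ by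
    rw [← mul_sub]
    exact mul_le_mul_of_nonneg_left (hgap s hs) hα.le
  have hlog : Real.log (wk / wi) ≤ ∑ s ∈ Icc 1 τ, (α * ℓk s - α * ℓi s) :=
    calc Real.log (wk / wi)
      _ ≤ τ * (α * Δ) := (div_le_iff₀ (mul_pos hα hΔ)).1 hτ
      _ = #(Icc 1 τ) • (α * Δ) := by rw [Nat.card_Icc, Nat.add_sub_cancel, nsmul_eq_mul]
      _ ≤ ∑ s ∈ Icc 1 τ, (α * ℓk s - α * ℓi s) := card_nsmul_le_sum _ _ _ hscaled_gap
  exact mul_prod_one_sub_le_mul_prod_one_sub hwi.le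
    (fun s hs ↦ mul_nonneg hα.le (hℓi s hs))
    (fun s hs ↦ sub_nonneg.1 ((mul_pos hα hΔ).le.trans (hscaled_gap s hs)))
    hℓk ((div_le_iff₀' hwi).1 (Real.le_exp_of_log_le hlog))

/-- Catch-up time bound: a newly-arriving worker `i` with uniformly smaller
per-slot loss (gap `Δ`) overtakes the incumbent `k` in multiplicatively updated
weight within `⌈ln(w_k⁰/w_i⁰)/(αΔ)⌉` slots. -/
theorem stmt12 (α : ℝ) (hα0 : 0 < α) (hα : α < 1/2)
    (wi wk : ℝ) (hwi : 0 < wi) (hwk : 0 < wk) (hlt : wi < wk)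
    (ℓi ℓk : ℕ → ℝ)
    (hℓi : ∀ s, ℓi s ∈ Set.Icc (0:ℝ) 1) (hℓk : ∀ s, ℓk s ∈ Set.Icc (0:ℝ) 1)
    (Δ : ℝ) (hΔ : 0 < Δ) (hgap : ∀ s, Δ ≤ ℓk s - ℓi s)
    (τ : ℕ) (hτ : Real.log (wk / wi) / (α * Δ) ≤ (τ : ℝ)) :
    wk * ∏ s ∈ Finset.Icc 1 τ, (1 - α * ℓk s)
      ≤ wi * ∏ s ∈ Finset.Icc 1 τ, (1 - α * ℓi s) :=
  stmt12_general hα0 hwi (fun s _ ↦ (hℓi s).1)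
    (fun s _ ↦ mul_le_one₀ (by linarith) (hℓk s).1 (hℓk s).2) hΔ (fun s _ ↦ hgap s) hτ
end

section
/- Let N ≥ 2, T ≥ 1, α > 0, and let (ℓ̃_i^t) for i ∈ {1,...,N}, t ∈ {1,...,T} be nonnegative reals with α·ℓ̃_i^t ≤ 1/2 for all i, t. Define γ_i^1 = 1 and γ_i^{t+1} = γ_i^t·(1 − α ℓ̃_i^t). Then for every index k ∈ {1,...,N}: Σ_{t=1}^T (Σ_{i=1}^N γ_i^t ℓ̃_i^t)/(Σ_{i'=1}^N γ_{i'}^t) − Σ_{t=1}^T ℓ̃_k^t ≤ (ln N)/α + (α/2)·Σ_{t=1}^T (Σ_{i=1}^N γ_i^t (ℓ̃_i^t)²)/(Σ_{i'=1}^N γ_{i'}^t) + α·Σ_{t=1}^T (ℓ̃_k^t)². -/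
open Finset

/-!
With `x = α ℓ`, follow the potential `log ∑ i, γ n i` from round `0` to round `T`. Since
`log y ≤ y - 1`, every round lowers it by at least the weighted mean of `x`. On the other hand the
potential never falls below `log (γ n k)`, and for `x ≤ 1 / 2` the bound `-x - x ^ 2 ≤ log (1 - x)`
limits the decrease of `log (γ n k)` in a round to `x + x ^ 2`. Applying `log y ≤ y - 1` to the
ratio of consecutive totals, rather than Jensen's inequality to the factors `1 - x`, avoids any
second moment under the weighted mean.
-/

lemma one_le_one_sub_mul_exp_add_sq {x : ℝ} (hx : x ≤ 1 / 2) :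
    1 ≤ (1 - x) * Real.exp (x + x ^ 2) := by
  have h_one_sub : 0 ≤ 1 - x := by linarith
  rcases le_total x 0 with hneg | hnonneg
  · have hcube : x ^ 3 ≤ 0 := Odd.pow_nonpos (by decide) hneg
    calc 1 ≤ (1 - x) * (x + x ^ 2 + 1) := by linarith
      _ ≤ (1 - x) * Real.exp (x + x ^ 2) := by gcongr; exact Real.add_one_le_exp _
  · have hsq : x ^ 2 ≤ (1 / 2) ^ 2 := by gcongr
    have hcube : x ^ 3 ≤ (1 / 2) ^ 3 := by gcongr
    have hfactor : 0 ≤ 1 - x - x ^ 2 - x ^ 3 := by linarith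
    calc 1 ≤ 1 + x ^ 2 * (1 - x - x ^ 2 - x ^ 3) / 2 := le_add_of_nonneg_right (by positivity)
      _ = (1 - x) * (1 + (x + x ^ 2) + (x + x ^ 2) ^ 2 / 2) := by ring
      _ ≤ (1 - x) * Real.exp (x + x ^ 2) := by
        gcongr
        exact Real.quadratic_le_exp_of_nonneg (by positivity)

lemma neg_sub_sq_le_log_one_sub {x : ℝ} (hx : x ≤ 1 / 2) : -x - x ^ 2 ≤ Real.log (1 - x) := by
  rw [Real.le_log_iff_exp_le (by linarith), ← neg_add', Real.exp_neg,
    inv_le_iff_one_le_mul₀ (Real.exp_pos _)]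
  exact one_le_one_sub_mul_exp_add_sq hx

lemma log_sum_mul_one_sub_le {ι : Type*} {s : Finset ι} {w x : ι → ℝ}
    (hw : 0 < ∑ i ∈ s, w i) (hw' : 0 < ∑ i ∈ s, w i * (1 - x i)) :
    Real.log (∑ i ∈ s, w i * (1 - x i)) ≤
      Real.log (∑ i ∈ s, w i) - (∑ i ∈ s, w i * x i) / ∑ i ∈ s, w i := by
  have hsum : ∑ i ∈ s, w i * (1 - x i) = ∑ i ∈ s, w i - ∑ i ∈ s, w i * x i := by
    simp only [mul_sub, mul_one, sum_sub_distrib]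
  have hratio : (∑ i ∈ s, w i * (1 - x i)) / ∑ i ∈ s, w i - 1 =
      -((∑ i ∈ s, w i * x i) / ∑ i ∈ s, w i) := by
    rw [hsum, sub_div, div_self hw.ne']
    ring
  have hlog := Real.log_le_sub_one_of_pos (div_pos hw' hw)
  rw [Real.log_div hw'.ne' hw.ne', hratio] at hlog
  linarith

lemma sum_fin_sub {M : Type*} [AddCommGroup M] (f : ℕ → M) (n : ℕ) :
    ∑ t : Fin n, (f (t + 1) - f t) = f n - f 0 := by
  rw [Fin.sum_univ_eq_sum_range fun t => f (t + 1) - f t, sum_range_sub]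

section SingleWeight

variable {T : ℕ} {w : ℕ → ℝ} {x : Fin T → ℝ}

lemma pos_of_mul_one_sub_rec (hx : ∀ t, x t < 1) (hw0 : 0 < w 0)
    (hw : ∀ t : Fin T, w (t + 1) = w t * (1 - x t)) {n : ℕ} (hn : n ≤ T) : 0 < w n := by
  induction n with
  | zero => exact hw0
  | succ n ih =>
    rw [hw ⟨n, hn⟩]
    exact mul_pos (ih (Nat.le_of_succ_le hn)) (sub_pos.2 (hx _))

lemma log_sub_sum_le_log_of_mul_one_sub_rec (hx : ∀ t, x t ≤ 1 / 2) (hw0 : 0 < w 0)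
    (hw : ∀ t : Fin T, w (t + 1) = w t * (1 - x t)) :
    Real.log (w 0) - ∑ t, x t - ∑ t, x t ^ 2 ≤ Real.log (w T) := by
  have hx_lt (t : Fin T) : x t < 1 := by linarith [hx t]
  have hround (t : Fin T) : -x t - x t ^ 2 ≤ Real.log (w (t + 1)) - Real.log (w t) := by
    have hpos : 0 < w t := pos_of_mul_one_sub_rec hx_lt hw0 hw t.2.le
    rw [hw, Real.log_mul hpos.ne' (sub_pos.2 (hx_lt t)).ne', add_sub_cancel_left]
    exact neg_sub_sq_le_log_one_sub (hx t)
  have hsum := sum_le_sum fun t (_ : t ∈ univ) => hround t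
  rw [sum_fin_sub fun n => Real.log (w n), sum_sub_distrib, sum_neg_distrib] at hsum
  linarith

end SingleWeight

section WeightFamily

variable {ι : Type*} [Fintype ι] {T : ℕ} {γ : ℕ → ι → ℝ}

lemma log_sum_le_log_sum_sub_sum_weighted_mean [Nonempty ι] {x : Fin T → ι → ℝ}
    (hx : ∀ t i, x t i < 1) (hγ0 : ∀ i, 0 < γ 0 i)
    (hγ : ∀ (t : Fin T) i, γ (t + 1) i = γ t i * (1 - x t i)) :
    Real.log (∑ i, γ T i) ≤
      Real.log (∑ i, γ 0 i) - ∑ t : Fin T, (∑ i, γ t i * x t i) / ∑ i, γ t i := by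
  have hpos {n : ℕ} (hn : n ≤ T) : 0 < ∑ i, γ n i :=
    sum_pos (fun i _ => pos_of_mul_one_sub_rec (w := (γ · i)) (hx · i) (hγ0 i) (hγ · i) hn)
      univ_nonempty
  have hround (t : Fin T) : (∑ i, γ t i * x t i) / ∑ i, γ t i ≤
      -(Real.log (∑ i, γ (t + 1) i) - Real.log (∑ i, γ t i)) := by
    have hnext : 0 < ∑ i, γ (t + 1) i := hpos t.2
    simp only [hγ] at hnext ⊢
    linarith [log_sum_mul_one_sub_le (hpos t.2.le) hnext]
  have hsum := sum_le_sum fun t (_ : t ∈ univ) => hround t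
  rw [sum_neg_distrib, sum_fin_sub fun n => Real.log (∑ i, γ n i)] at hsum
  linarith

lemma sum_weighted_mean_sub_sum_le {x : Fin T → ι → ℝ}
    (hx : ∀ t i, x t i ≤ 1 / 2) (hγ0 : ∀ i, 0 < γ 0 i)
    (hγ : ∀ (t : Fin T) i, γ (t + 1) i = γ t i * (1 - x t i)) (k : ι) :
    ∑ t : Fin T, (∑ i, γ t i * x t i) / (∑ i, γ t i) - ∑ t, x t k ≤
      Real.log ((∑ i, γ 0 i) / γ 0 k) + ∑ t, x t k ^ 2 := by
  have : Nonempty ι := ⟨k⟩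
  have hx_lt (t : Fin T) (i : ι) : x t i < 1 := by linarith [hx t i]
  have hγT (i : ι) : 0 < γ T i :=
    pos_of_mul_one_sub_rec (w := (γ · i)) (hx_lt · i) (hγ0 i) (hγ · i) le_rfl
  have hlower := log_sub_sum_le_log_of_mul_one_sub_rec (w := (γ · k)) (hx · k) (hγ0 k) (hγ · k)
  have hmono : Real.log (γ T k) ≤ Real.log (∑ i, γ T i) :=
    Real.log_le_log (hγT k) (single_le_sum (fun i _ => (hγT i).le) (mem_univ k))
  have hupper := log_sum_le_log_sum_sub_sum_weighted_mean hx_lt hγ0 hγ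
  have htotal : 0 < ∑ i, γ 0 i := sum_pos (fun i _ => hγ0 i) univ_nonempty
  rw [Real.log_div htotal.ne' (hγ0 k).ne']
  linarith

lemma sum_weighted_mean_nonneg {x z : Fin T → ι → ℝ}
    (hx : ∀ t i, x t i < 1) (hγ0 : ∀ i, 0 < γ 0 i)
    (hγ : ∀ (t : Fin T) i, γ (t + 1) i = γ t i * (1 - x t i)) (hz : ∀ t i, 0 ≤ z t i) :
    0 ≤ ∑ t : Fin T, (∑ i, γ t i * z t i) / ∑ i, γ t i := by
  have hγ_nonneg (t : Fin T) (i : ι) : 0 ≤ γ t i :=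
    (pos_of_mul_one_sub_rec (w := (γ · i)) (hx · i) (hγ0 i) (hγ · i) t.2.le).le
  exact sum_nonneg fun t _ => div_nonneg
    (sum_nonneg fun i _ => mul_nonneg (hγ_nonneg t i) (hz t i))
    (sum_nonneg fun i _ => hγ_nonneg t i)

theorem stmt16_general {α : ℝ} (hα : 0 < α) {ℓ : Fin T → ι → ℝ}
    (hℓ : ∀ t i, α * ℓ t i ≤ 1 / 2) (hγ0 : ∀ i, 0 < γ 0 i)
    (hγ : ∀ (t : Fin T) i, γ (t + 1) i = γ t i * (1 - α * ℓ t i)) (k : ι) :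
    ∑ t : Fin T, (∑ i, γ t i * ℓ t i) / (∑ i, γ t i) - ∑ t, ℓ t k ≤
      Real.log ((∑ i, γ 0 i) / γ 0 k) / α + α * ∑ t, ℓ t k ^ 2 := by
  have hscaled := sum_weighted_mean_sub_sum_le hℓ hγ0 hγ k
  simp only [mul_left_comm _ α, mul_pow, ← mul_sum, mul_div_assoc, ← mul_sub] at hscaled
  refine le_of_mul_le_mul_left (hscaled.trans_eq ?_) hα
  field_simp

end WeightFamily

/-- Core deterministic regret inequality for the online mixed selection
mechanism (Theorem 2): with auxiliary weights `γ_i^{t+1} = γ_i^t (1 − α ℓ̃_i^t)`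
and bounded estimators `α ℓ̃_i^t ≤ 1/2`, the weight-averaged estimated loss
exceeds that of any fixed index `k` by at most
`(ln N)/α + (α/2) Σ_t ⟨(ℓ̃^t)²⟩_γ + α Σ_t (ℓ̃_k^t)²`. -/
theorem stmt16 (N T : ℕ) (hN : 2 ≤ N) (hT : 1 ≤ T)
    (α : ℝ) (hα : 0 < α)
    (ℓ : Fin T → Fin N → ℝ) (hℓ0 : ∀ t i, 0 ≤ ℓ t i)
    (hℓ : ∀ t i, α * ℓ t i ≤ 1/2)
    (γ : ℕ → Fin N → ℝ) (hγ0 : ∀ i, γ 0 i = 1)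
    (hγrec : ∀ (t : Fin T) (i : Fin N), γ (t.1 + 1) i = γ t.1 i * (1 - α * ℓ t i))
    (k : Fin N) :
    (∑ t : Fin T, (∑ i, γ t.1 i * ℓ t i) / (∑ i, γ t.1 i)) - ∑ t : Fin T, ℓ t k
      ≤ Real.log N / α
        + (α / 2) * ∑ t : Fin T, (∑ i, γ t.1 i * (ℓ t i) ^ 2) / (∑ i, γ t.1 i)
        + α * ∑ t : Fin T, (ℓ t k) ^ 2 := by
  have hγ0_pos (i : Fin N) : 0 < γ 0 i := by simp only [hγ0, zero_lt_one]
  have hregret := stmt16_general hα hℓ hγ0_pos hγrec k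
  have hsecond := sum_weighted_mean_nonneg (fun t i => (hℓ t i).trans_lt one_half_lt_one)
    hγ0_pos hγrec fun t i => sq_nonneg (ℓ t i)
  simp only [hγ0, sum_const, card_univ, Fintype.card_fin, nsmul_eq_mul, mul_one, div_one]
    at hregret
  linarith [mul_nonneg (half_pos hα).le hsecond]
end
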